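/- There is a universal constant c > 0 with the following property. Let T ≥ 1 and K ≥ 2 be integers and τ ∈ (0,1). Consider the K-armed censored Bernoulli bandit: an environment is a vector μ ∈ [0,1]^K; a policy is a sequence of measurable maps π_t : ([K] × {0,1})^{t−1} × [0,1]^t → [K] (the last argument being an exogenous i.i.d. Uniform([0,1]) randomization sequence U_1,…,U_t); at each round t the policy selects arm k_t = π_t((k_1,Z_1),…,(k_{t−1},Z_{t−1}), U_1,…,U_t) and, conditionally on the past, observes Z_t ∈ {0,1} distributed as Bernoulli(τ·μ_{k_t}). The regret is R(T,μ) = Σ_{t=1}^T (max_{k} μ_k − 𝔼[μ_{k_t}]). Then for every policy there exists μ ∈ [0,1]^K such that R(T,μ) ≥ c · min( T, √(T K/τ) ). -/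

import Mathlib

open MeasureTheory Finset

/-- The uniform probability measure on `[0,1] ⊆ ℝ`. -/
noncomputable def unifI : Measure ℝ := volume.restrict (Set.Icc 0 1)

/-- The trajectory of a policy `π` interacting with the censored Bernoulli bandit with
censoring probability `τ` and mean vector `μ`, driven by the exogenous randomness
`W` (used to generate the censored Bernoulli observations `Z_t = 1{W_t ≤ τ·μ_{k_t}}`)
and `U` (the policy's own randomization sequence).  `traj π τ μ W U t` is the pair
`(k_{t+1}, Z_{t+1})` of the arm pulled and the observation received at round `t+1`
(rounds are indexed from `0` here). -/
noncomputable def traj {K : ℕ}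
    (π : (t : ℕ) → (Fin t → Fin K × Bool) → (Fin (t + 1) → ℝ) → Fin K)
    (τ : ℝ) (μ : Fin K → ℝ) (W U : ℕ → ℝ) : ℕ → Fin K × Bool
  | t =>
    let k := π t (fun s => traj π τ μ W U s.1) (fun s => U s.1)
    (k, if W t ≤ τ * μ k then true else false)
decreasing_by exact s.2


/-- Bernoulli mass. -/
noncomputable def bm (p : ℝ) (b : Bool) : ℝ := if b then p else 1 - p

lemma bm_pos {p : ℝ} (h0 : 0 < p) (h1 : p < 1) (b : Bool) : 0 < bm p b := by
  unfold bm; cases b <;> simp <;> linarith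

lemma flip_sum {T : ℕ} (p : ℝ) (t : Fin T) (h : (Fin T → Bool) → ℝ)
    (hh : ∀ z b, h (Function.update z t b) = h z) (g : Bool → ℝ) :
    ∑ z : Fin T → Bool, (∏ s, bm p (z s)) * (h z * g (z t))
      = (p * g true + (1 - p) * g false) * ∑ z : Fin T → Bool, (∏ s, bm p (z s)) * h z := by
  rw [Finset.mul_sum, ← sub_eq_zero, ← Finset.sum_sub_distrib]
  have key : ∀ (z : Fin T → Bool) b, (∏ s, bm p (Function.update z t b s))
      = bm p b * ∏ s ∈ Finset.univ.erase t, bm p (z s) := by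
    intro z b
    rw [← Finset.mul_prod_erase Finset.univ _ (Finset.mem_univ t)]
    congr 1
    · simp
    · apply Finset.prod_congr rfl
      intro s hs
      rw [Function.update_of_ne (Finset.ne_of_mem_erase hs)]
  apply Finset.sum_involution (fun z _ => Function.update z t (!(z t)))
  · intro z _
    rw [key, hh]
    have := key z (z t)
    rw [Function.update_eq_self] at this
    rw [this]
    simp only [Function.update_self]
    cases z t <;> simp [bm] <;> ring
  · intro z _ _ heq
    have := congrFun heq t
    simp at this
  · intro z _; simp
  · intro z _; simp

lemma pointwise_ineq (a b N T : ℝ) (ha : 0 < a) (hb : 0 < b) (hN : 0 ≤ N) (hNT : N ≤ T) :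
    (b - a) * N ≤ T * (8 * (b - a - a * Real.log (b / a)) + (a + b) / 16) := by
  have hT : 0 ≤ T := hN.trans hNT
  obtain ⟨r, hr, rfl⟩ : ∃ r, 0 < r ∧ b = r ^ 2 := ⟨√b, Real.sqrt_pos.2 hb, (Real.sq_sqrt hb.le).symm⟩
  obtain ⟨s, hs, rfl⟩ : ∃ s, 0 < s ∧ a = s ^ 2 := ⟨√a, Real.sqrt_pos.2 ha, (Real.sq_sqrt ha.le).symm⟩
  have h1 : Real.log (r ^ 2 / s ^ 2) ≤ 2 * (r / s - 1) := by
    rw [← div_pow, Real.log_pow]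
    have := Real.log_le_sub_one_of_pos (div_pos hr hs)
    push_cast; linarith
  have h2 : s ^ 2 * Real.log (r ^ 2 / s ^ 2) ≤ 2 * (r * s - s ^ 2) := by
    calc _ ≤ s ^ 2 * (2 * (r / s - 1)) := by gcongr
      _ = _ := by field_simp
  have h3 : |r ^ 2 - s ^ 2| ≤ 8 * (r ^ 2 - s ^ 2 - s ^ 2 * Real.log (r ^ 2 / s ^ 2)) + (s ^ 2 + r ^ 2) / 16 := by
    have h4 : |r ^ 2 - s ^ 2| ≤ 8 * (r - s) ^ 2 + (s ^ 2 + r ^ 2) / 16 := by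
      rw [abs_le]
      constructor <;> nlinarith [sq_nonneg (16 * (r - s) - (r + s)), sq_nonneg (16 * (r - s) + (r + s)), sq_nonneg (r - s)]
    nlinarith
  calc _ ≤ |r ^ 2 - s ^ 2| * N := by gcongr; exact le_abs_self _
    _ ≤ |r ^ 2 - s ^ 2| * T := by gcongr
    _ ≤ _ := by rw [mul_comm]; gcongr

lemma kl_bound {p q : ℝ} (hp0 : 0 < p) (hp1 : p < 1) (hq0 : 0 < q) (hq1 : q < 1) :
    -(p * Real.log (bm q true / bm p true) + (1 - p) * Real.log (bm q false / bm p false))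
      ≤ (p - q) ^ 2 / (q * (1 - q)) := by
  simp only [bm, if_true, Bool.false_eq_true, if_false]
  have e1 : Real.log (q / p) = - Real.log (p / q) := by rw [← Real.log_inv, inv_div]
  have e2 : Real.log ((1 - q) / (1 - p)) = - Real.log ((1 - p) / (1 - q)) := by
    rw [← Real.log_inv, inv_div]
  have hp' : 0 < 1 - p := by linarith
  have hq' : 0 < 1 - q := by linarith
  have h1 := Real.log_le_sub_one_of_pos (div_pos hp0 hq0)
  have h2 := Real.log_le_sub_one_of_pos (div_pos hp' hq')
  rw [e1, e2]
  calc _ = p * Real.log (p / q) + (1 - p) * Real.log ((1 - p) / (1 - q)) := by ring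
    _ ≤ p * (p / q - 1) + (1 - p) * ((1 - p) / (1 - q) - 1) := by gcongr
    _ = _ := by field_simp; ring

lemma finite_bound {T K : ℕ} (hK : 2 ≤ K) (a : (Fin T → Bool) → Fin T → Fin K)
    (ha : ∀ z t b, a (Function.update z t b) t = a z t) {p q : ℝ}
    (hp0 : 0 < p) (hp1 : p < 1) (hq0 : 0 < q) (hq1 : q < 1)
    (hP0 : ∑ z : Fin T → Bool, ∏ t, bm p (z t) = 1)
    (hP : ∀ k, ∑ z : Fin T → Bool, ∏ t, bm (if a z t = k then q else p) (z t) = 1)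
    (hκ : 64 * T * ((p - q) ^ 2 / (q * (1 - q))) ≤ K) :
    ∑ k, ∑ z : Fin T → Bool, (∏ t, bm (if a z t = k then q else p) (z t)) *
      ∑ t, (if a z t = k then (1 : ℝ) else 0) ≤ 3 / 4 * K * T := by
  set κ := (p - q) ^ 2 / (q * (1 - q)) with hκd
  have hκ0 : 0 ≤ κ := by
    apply div_nonneg (sq_nonneg _)
    apply mul_nonneg hq0.le; linarith
  set P0 : (Fin T → Bool) → ℝ := fun z => ∏ t, bm p (z t) with hP0d
  have hP0pos : ∀ z, 0 < P0 z := fun z => Finset.prod_pos fun t _ => bm_pos hp0 hp1 _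
  set N : Fin K → (Fin T → Bool) → ℝ := fun k z => ∑ t, (if a z t = k then (1 : ℝ) else 0) with hN
  set x : Fin K → ℝ := fun k => ∑ z, P0 z * N k z with hx
  have hxsum : ∑ k, x k = T := by
    simp only [hx]
    rw [Finset.sum_comm]
    simp_rw [← Finset.mul_sum]
    have : ∀ z, ∑ k, N k z = T := by
      intro z
      simp only [hN]
      rw [Finset.sum_comm]
      simp
    simp_rw [this, ← Finset.sum_mul]
    rw [hP0, one_mul]
  have hk : ∀ k, ∑ z : Fin T → Bool, (∏ t, bm (if a z t = k then q else p) (z t)) * N k z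
      ≤ x k + T * (8 * (κ * x k) + 1 / 8) := by
    intro k
    set Pk : (Fin T → Bool) → ℝ := fun z => ∏ t, bm (if a z t = k then q else p) (z t) with hPk
    have hPkpos : ∀ z, 0 < Pk z := fun z => Finset.prod_pos fun t _ => by
      split_ifs
      · exact bm_pos hq0 hq1 _
      · exact bm_pos hp0 hp1 _
    have hlog : ∀ z, Real.log (Pk z / P0 z)
        = ∑ t, (if a z t = k then (1 : ℝ) else 0) * Real.log (bm q (z t) / bm p (z t)) := by
      intro z
      simp only [hPk, hP0d]
      rw [← Finset.prod_div_distrib, Real.log_prod]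
      · apply Finset.sum_congr rfl
        intro t _
        split_ifs
        · simp
        · rw [div_self (bm_pos hp0 hp1 _).ne']; simp
      · intro t _
        apply div_ne_zero
        · split_ifs
          · exact (bm_pos hq0 hq1 _).ne'
          · exact (bm_pos hp0 hp1 _).ne'
        · exact (bm_pos hp0 hp1 _).ne'
    have hKL : -∑ z, P0 z * Real.log (Pk z / P0 z) ≤ κ * x k := by
      simp_rw [hlog, Finset.mul_sum]
      rw [Finset.sum_comm]
      have hf : ∀ t : Fin T, ∑ z, P0 z * ((if a z t = k then (1 : ℝ) else 0) *
          Real.log (bm q (z t) / bm p (z t))) = _ := fun t =>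
        flip_sum p t (fun z => if a z t = k then (1 : ℝ) else 0)
          (fun z b => by simp only [ha]) (fun b => Real.log (bm q b / bm p b))
      simp_rw [hf]
      rw [← Finset.mul_sum, ← neg_mul]
      have : x k = ∑ t, ∑ z, (∏ s, bm p (z s)) * (if a z t = k then (1 : ℝ) else 0) := by
        rw [Finset.sum_comm]
        simp only [hx, hN, hP0d, Finset.mul_sum]
      rw [← this]
      apply mul_le_mul_of_nonneg_right (kl_bound hp0 hp1 hq0 hq1)
      apply Finset.sum_nonneg
      intro z _
      apply mul_nonneg (hP0pos z).le
      apply Finset.sum_nonneg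
      intro t _
      split_ifs <;> norm_num
    have hNb : ∀ z, 0 ≤ N k z ∧ N k z ≤ T := by
      intro z
      constructor
      · apply Finset.sum_nonneg
        intro t _
        split_ifs <;> norm_num
      · calc N k z ≤ ∑ t : Fin T, (1 : ℝ) := by
              apply Finset.sum_le_sum
              intro t _
              split_ifs <;> norm_num
          _ = T := by simp
    have hsum := Finset.sum_le_sum (s := Finset.univ) fun z _ =>
      pointwise_ineq (P0 z) (Pk z) (N k z) T (hP0pos z) (hPkpos z) (hNb z).1 (hNb z).2
    rw [← Finset.mul_sum, Finset.sum_add_distrib, ← Finset.mul_sum, ← Finset.sum_div,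
      Finset.sum_add_distrib, Finset.sum_sub_distrib, Finset.sum_sub_distrib, hP0, hP k] at hsum
    simp_rw [sub_mul] at hsum
    rw [Finset.sum_sub_distrib] at hsum
    have : (T : ℝ) * (8 * (1 - 1 - ∑ z, P0 z * Real.log (Pk z / P0 z)) + (1 + 1) / 16) ≤
        T * (8 * (κ * x k) + 1 / 8) := by
      apply mul_le_mul_of_nonneg_left _ (Nat.cast_nonneg T)
      linarith
    simp only [hx]
    linarith
  have hs := Finset.sum_le_sum (s := Finset.univ) fun k _ => hk k
  refine hs.trans ?_
  rw [Finset.sum_add_distrib, ← Finset.mul_sum, Finset.sum_add_distrib, ← Finset.mul_sum,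
    ← Finset.mul_sum, hxsum]
  simp only [Finset.sum_const, Finset.card_univ, Fintype.card_fin, nsmul_eq_mul]
  have hK' : (2 : ℝ) ≤ K := by exact_mod_cast hK
  have hT : (0 : ℝ) ≤ T := Nat.cast_nonneg T
  nlinarith [mul_le_mul_of_nonneg_left hκ hT, mul_le_mul_of_nonneg_left hK' hT]

noncomputable def trajz {K : ℕ}
    (π : (t : ℕ) → (Fin t → Fin K × Bool) → (Fin (t + 1) → ℝ) → Fin K)
    (U : ℕ → ℝ) (z : ℕ → Bool) : ℕ → Fin K × Bool
  | t => (π t (fun s => trajz π U z s.1) (fun s => U s.1), z t)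
decreasing_by exact s.2

lemma trajz_fst {K : ℕ}
    (π : (t : ℕ) → (Fin t → Fin K × Bool) → (Fin (t + 1) → ℝ) → Fin K)
    (U : ℕ → ℝ) (z : ℕ → Bool) (t : ℕ) :
    (trajz π U z t).1 = π t (fun s => trajz π U z s.1) (fun s => U s.1) := by
  rw [trajz]

lemma trajz_snd {K : ℕ}
    (π : (t : ℕ) → (Fin t → Fin K × Bool) → (Fin (t + 1) → ℝ) → Fin K)
    (U : ℕ → ℝ) (z : ℕ → Bool) (t : ℕ) :
    (trajz π U z t).2 = z t := by
  rw [trajz]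

lemma traj_fst {K : ℕ}
    (π : (t : ℕ) → (Fin t → Fin K × Bool) → (Fin (t + 1) → ℝ) → Fin K)
    (τ : ℝ) (μ : Fin K → ℝ) (W U : ℕ → ℝ) (t : ℕ) :
    (traj π τ μ W U t).1 = π t (fun s => traj π τ μ W U s.1) (fun s => U s.1) := by
  rw [traj]

lemma traj_snd {K : ℕ}
    (π : (t : ℕ) → (Fin t → Fin K × Bool) → (Fin (t + 1) → ℝ) → Fin K)
    (τ : ℝ) (μ : Fin K → ℝ) (W U : ℕ → ℝ) (t : ℕ) :
    (traj π τ μ W U t).2 = decide (W t ≤ τ * μ (traj π τ μ W U t).1) := by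
  rw [traj]
  simp only
  split_ifs with h <;> simp [h]

lemma trajz_local {K : ℕ}
    (π : (t : ℕ) → (Fin t → Fin K × Bool) → (Fin (t + 1) → ℝ) → Fin K)
    (U : ℕ → ℝ) (z z' : ℕ → Bool) (t : ℕ) (h : ∀ s < t, z s = z' s) :
    (trajz π U z t).1 = (trajz π U z' t).1 ∧ ∀ s < t, trajz π U z s = trajz π U z' s := by
  induction t using Nat.strong_induction_on with
  | _ t ih =>
    have h2 : ∀ s < t, trajz π U z s = trajz π U z' s := by
      intro s hs
      apply Prod.ext
      · exact (ih s hs fun r hr => h r (hr.trans hs)).1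
      · rw [trajz_snd, trajz_snd]; exact h s hs
    refine ⟨?_, h2⟩
    rw [trajz_fst, trajz_fst]
    congr 1
    funext s
    exact h2 s.1 s.2

lemma traj_eq_trajz {K : ℕ}
    (π : (t : ℕ) → (Fin t → Fin K × Bool) → (Fin (t + 1) → ℝ) → Fin K)
    (τ : ℝ) (μ : Fin K → ℝ) (W U : ℕ → ℝ) (z : ℕ → Bool) (T : ℕ)
    (h : ∀ t < T, decide (W t ≤ τ * μ (trajz π U z t).1) = z t) :
    ∀ t < T, traj π τ μ W U t = trajz π U z t := by
  intro t
  induction t using Nat.strong_induction_on with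
  | _ t ih =>
    intro ht
    have h1 : (traj π τ μ W U t).1 = (trajz π U z t).1 := by
      rw [traj_fst, trajz_fst]
      congr 1
      funext s
      exact ih s.1 s.2 (s.2.trans ht)
    apply Prod.ext h1
    rw [traj_snd, trajz_snd, h1, h t ht]

lemma traj_eq_trajz' {K : ℕ}
    (π : (t : ℕ) → (Fin t → Fin K × Bool) → (Fin (t + 1) → ℝ) → Fin K)
    (τ : ℝ) (μ : Fin K → ℝ) (W U : ℕ → ℝ) (z : ℕ → Bool) (T : ℕ)
    (h : ∀ t < T, (traj π τ μ W U t).2 = z t) :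
    ∀ t < T, traj π τ μ W U t = trajz π U z t := by
  intro t
  induction t using Nat.strong_induction_on with
  | _ t ih =>
    intro ht
    apply Prod.ext
    · rw [traj_fst, trajz_fst]
      congr 1
      funext s
      exact ih s.1 s.2 (s.2.trans ht)
    · rw [h t ht, trajz_snd]

instance : IsProbabilityMeasure unifI := ⟨by simp [unifI]⟩

lemma unifI_bm {q : ℝ} (h0 : 0 ≤ q) (h1 : q ≤ 1) (b : Bool) :
    unifI.real {w : ℝ | decide (w ≤ q) = b} = bm q b := by
  have ht : unifI.real (Set.Iic q) = q := by
    rw [unifI, measureReal_restrict_apply measurableSet_Iic]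
    have : Set.Iic q ∩ Set.Icc 0 1 = Set.Icc 0 q := by
      ext x; simp; constructor
      · rintro ⟨a, b, c⟩; exact ⟨b, a⟩
      · rintro ⟨a, b⟩; exact ⟨b, a, b.trans h1⟩
    rw [this]; simp [h0]
  cases b
  · have : {w : ℝ | decide (w ≤ q) = false} = (Set.Iic q)ᶜ := by ext; simp
    rw [this, probReal_compl_eq_one_sub measurableSet_Iic, ht]; simp [bm]
  · have : {w : ℝ | decide (w ≤ q) = true} = (Set.Iic q) := by ext; simp
    rw [this, ht]; simp [bm]

/-- extension by default -/
def ext0 {α : Type*} {T : ℕ} (d : α) (z : Fin T → α) : ℕ → α :=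
  fun n => if h : n < T then z ⟨n, h⟩ else d

lemma ext0_coe {α : Type*} {T : ℕ} (d : α) (z : Fin T → α) (t : Fin T) :
    ext0 d z t.1 = z t := by simp [ext0]

lemma int_W {K T : ℕ}
    (π : (t : ℕ) → (Fin t → Fin K × Bool) → (Fin (t + 1) → ℝ) → Fin K)
    (τ : ℝ) (μ : Fin K → ℝ) (hμ : ∀ k, 0 ≤ τ * μ k ∧ τ * μ k ≤ 1) (U : ℕ → ℝ)
    (G : (Fin T → Fin K) → ℝ) :
    ∫ W : Fin T → ℝ, G (fun t => (traj π τ μ (ext0 0 W) U t).1) ∂(Measure.pi fun _ : Fin T => unifI)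
     = ∑ z : Fin T → Bool, (∏ t : Fin T, bm (τ * μ (trajz π U (ext0 false z) t).1) (z t)) *
        G (fun t => (trajz π U (ext0 false z) t).1) := by
  set S : (Fin T → Bool) → Set (Fin T → ℝ) := fun z =>
    Set.univ.pi fun t : Fin T => {w | decide (w ≤ τ * μ (trajz π U (ext0 false z) t).1) = z t} with hS
  have hSm : ∀ z, MeasurableSet (S z) := by
    intro z
    apply MeasurableSet.univ_pi
    intro t
    generalize τ * μ (trajz π U (ext0 false z) t).1 = c
    cases z t
    · have : {w : ℝ | decide (w ≤ c) = false} = Set.Ioi c := by ext; simp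
      rw [this]; exact measurableSet_Ioi
    · have : {w : ℝ | decide (w ≤ c) = true} = Set.Iic c := by ext; simp
      rw [this]; exact measurableSet_Iic
  have hSv : ∀ z, (Measure.pi fun _ : Fin T => unifI).real (S z)
      = ∏ t : Fin T, bm (τ * μ (trajz π U (ext0 false z) t).1) (z t) := by
    intro z
    rw [hS, measureReal_def, Measure.pi_pi, ENNReal.toReal_prod]
    apply Finset.prod_congr rfl
    intro t _
    rw [← measureReal_def, unifI_bm (hμ _).1 (hμ _).2]
  have hmem : ∀ W z, W ∈ S z ↔ z = fun t : Fin T => (traj π τ μ (ext0 0 W) U t).2 := by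
    intro W z
    constructor
    · intro hW
      have := traj_eq_trajz π τ μ (ext0 0 W) U (ext0 false z) T (by
        intro t ht
        have := hW ⟨t, ht⟩ (Set.mem_univ _)
        simp only [Set.mem_ofPred_eq] at this
        simpa [ext0, ht] using this)
      funext t
      rw [this t t.2, trajz_snd, ext0_coe]
    · intro hz
      have := traj_eq_trajz' π τ μ (ext0 0 W) U (ext0 false z) T (by
        intro t ht
        rw [hz]; simp [ext0, ht])
      intro t _
      simp only [Set.mem_ofPred_eq]
      rw [← this t t.2, hz]
      simp only [traj_snd, ext0_coe]
  have hfun : ∀ W : Fin T → ℝ, G (fun t => (traj π τ μ (ext0 0 W) U t).1)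
      = ∑ z, (S z).indicator (fun _ => G (fun t => (trajz π U (ext0 false z) t).1)) W := by
    intro W
    rw [Finset.sum_eq_single (fun t : Fin T => (traj π τ μ (ext0 0 W) U t).2)]
    · rw [Set.indicator_of_mem ((hmem _ _).2 rfl)]
      congr 1
      funext t
      rw [traj_eq_trajz' π τ μ (ext0 0 W) U _ T _ t t.2]
      intro t ht
      simp [ext0, ht]
    · intro z _ hz
      rw [Set.indicator_of_notMem]
      rwa [hmem]
    · simp
  simp_rw [hfun]
  rw [integral_finset_sum]
  · apply Finset.sum_congr rfl
    intro z _
    rw [integral_indicator_const _ (hSm z), hSv, smul_eq_mul]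
  · intro z _
    exact (integrable_const _).indicator (hSm z)

lemma traj_meas {K T : ℕ}
    (π : (t : ℕ) → (Fin t → Fin K × Bool) → (Fin (t + 1) → ℝ) → Fin K)
    (hπ : ∀ (t : ℕ) (h : Fin t → Fin K × Bool) (k : Fin K),
        MeasurableSet {u : Fin (t + 1) → ℝ | π t h u = k})
    (τ : ℝ) (μ : Fin K → ℝ) (t : ℕ) :
    Measurable (fun ω : (Fin T → ℝ) × (Fin T → ℝ) => traj π τ μ (ext0 0 ω.1) (ext0 0 ω.2) t) := by
  have hext : ∀ n, Measurable (fun w : Fin T → ℝ => ext0 0 w n) := by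
    intro n
    unfold ext0
    split_ifs
    · exact measurable_pi_apply _
    · exact measurable_const
  induction t using Nat.strong_induction_on with
  | _ t ih =>
    have h1 : Measurable (fun ω : (Fin T → ℝ) × (Fin T → ℝ) =>
        (traj π τ μ (ext0 0 ω.1) (ext0 0 ω.2) t).1) := by
      simp_rw [traj_fst]
      have hF : Measurable (fun x : (Fin t → Fin K × Bool) × (Fin (t + 1) → ℝ) => π t x.1 x.2) := by
        apply measurable_from_prod_countable_right
        intro h
        apply measurable_to_countable'
        intro k
        exact hπ t h k
      refine hF.comp (Measurable.prodMk ?_ ?_)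
      · exact measurable_pi_lambda _ fun s => ih s.1 s.2
      · exact measurable_pi_lambda _ fun s => (hext s.1).comp measurable_snd
    refine Measurable.prod h1 ?_
    simp_rw [traj_snd]
    apply measurable_to_bool
    have : ((fun ω : (Fin T → ℝ) × (Fin T → ℝ) => decide (ext0 0 ω.1 t ≤
        τ * μ (traj π τ μ (ext0 0 ω.1) (ext0 0 ω.2) t).1)) ⁻¹' {true})
        = {ω | ext0 0 ω.1 t ≤ τ * μ (traj π τ μ (ext0 0 ω.1) (ext0 0 ω.2) t).1} := by
      ext ω; simp
    rw [this]
    apply measurableSet_le ((hext t).comp measurable_fst)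
    exact ((measurable_of_countable μ).comp h1).const_mul τ

lemma core_bound {K T : ℕ} (hK : 2 ≤ K) (τ Δ : ℝ) (hτ0 : 0 < τ) (hτ1 : τ < 1)
    (hΔ0 : 0 < Δ) (hΔ1 : Δ ≤ 1 / 4) (hΔ : 512 * T * (τ * Δ ^ 2) ≤ K)
    (π : (t : ℕ) → (Fin t → Fin K × Bool) → (Fin (t + 1) → ℝ) → Fin K) (U : ℕ → ℝ) :
    ∑ k : Fin K, ∫ W : Fin T → ℝ, (∑ t : Fin T, if
      (traj π τ (fun j => if j = k then 1 / 2 + Δ else 1 / 2) (ext0 0 W) U t).1 = k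
        then (1 : ℝ) else 0) ∂(Measure.pi fun _ : Fin T => unifI) ≤ 3 / 4 * K * T := by
  have hb : ∀ x : ℝ, 0 ≤ x → x ≤ 3 / 4 → 0 ≤ τ * x ∧ τ * x ≤ 1 := by
    intro x h0 h1
    constructor
    · positivity
    · nlinarith
  have hμ : ∀ k j : Fin K, 0 ≤ τ * (if j = k then 1 / 2 + Δ else 1 / 2) ∧
      τ * (if j = k then 1 / 2 + Δ else 1 / 2) ≤ 1 := by
    intro k j
    apply hb <;> split_ifs <;> linarith
  set a : (Fin T → Bool) → Fin T → Fin K := fun z t => (trajz π U (ext0 false z) t).1 with ha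
  have hloc : ∀ z t b, a (Function.update z t b) t = a z t := by
    intro z t b
    refine (trajz_local π U _ _ t.1 ?_).1
    intro s hs
    simp only [ext0]
    split_ifs with h
    · rw [Function.update_of_ne]
      intro heq
      rw [← heq] at hs
      simp at hs
    · rfl
  have hif : ∀ k j : Fin K, τ * (if j = k then 1 / 2 + Δ else 1 / 2)
      = if j = k then τ * (1 / 2 + Δ) else τ * (1 / 2) := by
    intro k j; split_ifs <;> rfl
  have hP0 : ∑ z : Fin T → Bool, ∏ t, bm (τ * (1 / 2)) (z t) = 1 := by
    have := int_W (T := T) π τ (fun _ => 1 / 2) (fun _ => hb _ (by norm_num) (by norm_num)) U (fun _ => 1)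
    simp only [mul_one, integral_const, probReal_univ, smul_eq_mul] at this
    exact this.symm
  have hP : ∀ k, ∑ z : Fin T → Bool,
      ∏ t, bm (if a z t = k then τ * (1 / 2 + Δ) else τ * (1 / 2)) (z t) = 1 := by
    intro k
    have := int_W (T := T) π τ (fun j => if j = k then 1 / 2 + Δ else 1 / 2) (hμ k) U (fun _ => 1)
    simp only [mul_one, integral_const, probReal_univ, smul_eq_mul, hif] at this
    exact this.symm
  have hq1 : τ * (1 / 2 + Δ) < 3 / 4 := by nlinarith
  have hκ : 64 * T * ((τ * (1 / 2) - τ * (1 / 2 + Δ)) ^ 2 /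
      (τ * (1 / 2 + Δ) * (1 - τ * (1 / 2 + Δ)))) ≤ K := by
    refine le_trans ?_ hΔ
    have : (τ * (1 / 2) - τ * (1 / 2 + Δ)) ^ 2 /
      (τ * (1 / 2 + Δ) * (1 - τ * (1 / 2 + Δ))) ≤ 8 * (τ * Δ ^ 2) := by
      have hden : τ / 8 ≤ τ * (1 / 2 + Δ) * (1 - τ * (1 / 2 + Δ)) := by
        calc τ / 8 = (τ * (1 / 2)) * (1 / 4) := by ring
          _ ≤ _ := by
            apply mul_le_mul _ _ (by norm_num) (by positivity)
            · apply mul_le_mul_of_nonneg_left _ hτ0.le; linarith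
            · linarith
      rw [div_le_iff₀ (lt_of_lt_of_le (by positivity) hden)]
      calc _ = 8 * (τ * Δ ^ 2) * (τ / 8) := by ring
        _ ≤ _ := by gcongr
    calc _ ≤ 64 * T * (8 * (τ * Δ ^ 2)) := by gcongr
      _ = _ := by ring
  have := finite_bound hK a hloc (p := τ * (1 / 2)) (q := τ * (1 / 2 + Δ)) (by positivity)
    (by linarith) (by positivity) (by linarith) hP0 hP hκ
  refine le_trans (le_of_eq ?_) this
  apply Finset.sum_congr rfl
  intro k _
  rw [int_W π τ (fun j => if j = k then 1 / 2 + Δ else 1 / 2) (hμ k) U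
    (fun α => ∑ t : Fin T, if α t = k then (1 : ℝ) else 0)]
  simp only [hif, ha]

theorem minimax_lower_bound_censored_bandit :
    ∃ c : ℝ, 0 < c ∧
      ∀ (T K : ℕ), 1 ≤ T → 2 ≤ K →
      ∀ τ : ℝ, τ ∈ Set.Ioo (0 : ℝ) 1 →
      ∀ π : (t : ℕ) → (Fin t → Fin K × Bool) → (Fin (t + 1) → ℝ) → Fin K,
      -- measurability of the policy in its randomization argument
      (∀ (t : ℕ) (h : Fin t → Fin K × Bool) (k : Fin K),
        MeasurableSet {u : Fin (t + 1) → ℝ | π t h u = k}) →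
      ∃ μ : Fin K → ℝ, (∀ k, μ k ∈ Set.Icc (0 : ℝ) 1) ∧
        ∑ t ∈ Finset.range T,
            ((⨆ k, μ k) -
              ∫ ω : (Fin T → ℝ) × (Fin T → ℝ),
                μ (traj π τ μ
                    (fun n => if h : n < T then ω.1 ⟨n, h⟩ else 0)
                    (fun n => if h : n < T then ω.2 ⟨n, h⟩ else 0) t).1
                ∂((Measure.pi fun _ : Fin T => unifI).prod
                    (Measure.pi fun _ : Fin T => unifI))) ≥
          c * min (T : ℝ) (Real.sqrt (T * K / τ)) := by

  refine ⟨1 / 128, by norm_num, ?_⟩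
  intro T K hT hK τ ⟨hτ0, hτ1⟩ π hπ
  have hT' : (0 : ℝ) < T := by exact_mod_cast hT
  have hK' : (0 : ℝ) < K := by exact_mod_cast (by omega : 0 < K)
  set ρ : ℝ := √(K / (T * τ)) with hρ
  have hρ0 : 0 < ρ := Real.sqrt_pos.2 (by positivity)
  have hρ2 : ρ ^ 2 = K / (T * τ) := Real.sq_sqrt (by positivity)
  have hρT : T * ρ = √(T * K / τ) := by
    rw [← Real.sqrt_sq (by positivity : 0 ≤ T * ρ), mul_pow, hρ2]
    congr 1
    field_simp
  set Δ : ℝ := 1 / 32 * min 1 ρ with hΔd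
  have hm0 : 0 < min 1 ρ := lt_min one_pos hρ0
  have hm1 : min 1 ρ ≤ 1 := min_le_left _ _
  have hΔ0 : 0 < Δ := by positivity
  have hΔ1 : Δ ≤ 1 / 4 := by rw [hΔd]; linarith
  have hΔ2 : 512 * T * (τ * Δ ^ 2) ≤ K := by
    have h1 : Δ ^ 2 ≤ (1 / 32 * ρ) ^ 2 := by
      have := min_le_right 1 ρ
      rw [hΔd]; gcongr
    calc 512 * (T : ℝ) * (τ * Δ ^ 2) ≤ 512 * T * (τ * (1 / 32 * ρ) ^ 2) := by gcongr
      _ = 1 / 2 * (K : ℝ) := by rw [mul_pow, hρ2]; field_simp; norm_num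
      _ ≤ (K : ℝ) := by linarith
  set M : Fin K → Fin K → ℝ := fun k j => if j = k then 1 / 2 + Δ else 1 / 2 with hM
  set P := ((Measure.pi fun _ : Fin T => unifI).prod (Measure.pi fun _ : Fin T => unifI)) with hPd
  set F : Fin K → ℕ → (Fin T → ℝ) × (Fin T → ℝ) → ℝ := fun k t ω =>
    if (traj π τ (M k) (ext0 0 ω.1) (ext0 0 ω.2) t).1 = k then 1 else 0 with hF
  have hFm : ∀ k t, Measurable (F k t) := by
    intro k t
    have h1 := (traj_meas (T := T) π hπ τ (M k) t).fst
    exact (measurable_of_countable (fun j : Fin K => if j = k then (1 : ℝ) else 0)).comp h1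
  have hFi : ∀ k t, Integrable (F k t) P := by
    intro k t
    apply Integrable.of_bound (hFm k t).aestronglyMeasurable 1
    filter_upwards with ω
    simp only [hF]
    split_ifs <;> simp
  have hSi : ∀ k, Integrable (fun ω => ∑ t : Fin T, F k t ω) P := fun k =>
    integrable_finset_sum _ fun t _ => hFi k t
  have hsum : ∑ k, ∑ t ∈ Finset.range T, ∫ ω, F k t ω ∂P ≤ 3 / 4 * K * T := by
    have h1 : ∀ k, ∑ t ∈ Finset.range T, ∫ ω, F k t ω ∂P
        = ∫ u, ∫ w, ∑ t : Fin T, F k t (w, u) ∂(Measure.pi fun _ : Fin T => unifI)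
            ∂(Measure.pi fun _ : Fin T => unifI) := by
      intro k
      rw [← integral_prod_symm _ (hSi k), Finset.sum_range,
        integral_finset_sum _ fun (t : Fin T) _ => hFi k t]
    simp_rw [h1]
    rw [← integral_finset_sum _ fun k _ => (hSi k).integral_prod_right]
    have h2 := integral_mono (μ := Measure.pi fun _ : Fin T => unifI)
      (integrable_finset_sum Finset.univ fun k _ => (hSi k).integral_prod_right)
      (integrable_const (3 / 4 * (K : ℝ) * T))
      (fun u => core_bound (T := T) hK τ Δ hτ0 hτ1 hΔ0 hΔ1 hΔ2 π (ext0 0 u))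
    simpa using h2
  obtain ⟨k, hk⟩ : ∃ k : Fin K, ∑ t ∈ Finset.range T, ∫ ω, F k t ω ∂P ≤ 3 / 4 * T := by
    by_contra! hcon
    have : ∑ k : Fin K, 3 / 4 * (T : ℝ) < ∑ k, ∑ t ∈ Finset.range T, ∫ ω, F k t ω ∂P :=
      Finset.sum_lt_sum_of_nonempty ⟨⟨0, by omega⟩, Finset.mem_univ _⟩ fun k _ => hcon k
    simp only [Finset.sum_const, Finset.card_univ, Fintype.card_fin, nsmul_eq_mul] at this
    linarith
  refine ⟨M k, ?_, ?_⟩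
  · intro j
    simp only [hM]
    split_ifs <;> constructor <;> linarith
  have hsup : (⨆ j, M k j) = 1 / 2 + Δ := by
    haveI : Nonempty (Fin K) := ⟨k⟩
    apply le_antisymm
    · apply ciSup_le
      intro j
      simp only [hM]
      split_ifs <;> linarith
    · refine le_trans ?_ (le_ciSup (Set.finite_range (M k)).bddAbove k)
      simp [hM]
  have hint : ∀ t, ∫ ω, M k (traj π τ (M k) (ext0 0 ω.1) (ext0 0 ω.2) t).1 ∂P
      = 1 / 2 + Δ * ∫ ω, F k t ω ∂P := by
    intro t
    have : ∀ ω : (Fin T → ℝ) × (Fin T → ℝ), M k (traj π τ (M k) (ext0 0 ω.1) (ext0 0 ω.2) t).1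
        = 1 / 2 + Δ * F k t ω := by
      intro ω
      simp only [hF]
      generalize (traj π τ (M k) (ext0 0 ω.1) (ext0 0 ω.2) t).1 = j
      simp only [hM]
      split_ifs <;> simp
    simp_rw [this]
    rw [integral_add (integrable_const _) ((hFi k t).const_mul Δ), integral_const_mul]
    simp
  have hfin : ∑ t ∈ Finset.range T, ((⨆ j, M k j) -
      ∫ ω, M k (traj π τ (M k) (ext0 0 ω.1) (ext0 0 ω.2) t).1 ∂P)
      = Δ * (T - ∑ t ∈ Finset.range T, ∫ ω, F k t ω ∂P) := by
    simp_rw [hint, hsup]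
    rw [mul_sub, Finset.mul_sum, Finset.sum_sub_distrib, Finset.sum_add_distrib,
      Finset.sum_add_distrib]
    simp
    ring
  refine ge_iff_le.2 (le_trans ?_ (le_of_eq hfin.symm))
  have hmin : min (T : ℝ) √(T * K / τ) = T * min 1 ρ := by
    rw [← hρT, mul_min_of_nonneg _ _ hT'.le, mul_one]
  rw [hmin]
  calc 1 / 128 * (T * min 1 ρ) = Δ * (T - 3 / 4 * T) := by rw [hΔd]; ring
    _ ≤ _ := by gcongr
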